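/- The following are equivalent: (i) sNFLVR holds; (ii) ρ_{𝒞̃}(ξ) > 0 for every bounded measurable ξ : Ω → ℝ with ξ ≥ 0 q.s. and ξ not q.s. equal to 0; (iii) ρ_{𝒞̃}(1_A) > 0 for every A ∈ ℱ that is not 𝒫-polar. -/

import Mathlib

open MeasureTheory Filter Topology

namespace Paper

variable {Ω : Type*} [MeasurableSpace Ω]

/-- `N` is a `Ps`-polar set: it is contained in a measurable set which is null
for every measure in `Ps`. -/
def Polar (Ps : Set (Measure Ω)) (N : Set Ω) : Prop :=
  ∃ N' : Set Ω, MeasurableSet N' ∧ N ⊆ N' ∧ ∀ P ∈ Ps, P N' = 0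

/-- `X ≤ Y` holds `Ps`-quasi surely. -/
def LeQS (Ps : Set (Measure Ω)) (X Y : Ω → ℝ) : Prop :=
  Polar Ps {ω | ¬ X ω ≤ Y ω}

/-- `X = Y` holds `Ps`-quasi surely. -/
def EqQS (Ps : Set (Measure Ω)) (X Y : Ω → ℝ) : Prop :=
  Polar Ps {ω | X ω ≠ Y ω}

/-- The set of quasi-sure bounds of `X` relative to the weight `W`:
all `m ≥ 0` such that `|X| ≤ m • W` quasi surely. -/
def Bounds (Ps : Set (Measure Ω)) (W X : Ω → ℝ) : Set ℝ :=
  {m | 0 ≤ m ∧ Polar Ps {ω | m * W ω < |X ω|}}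

/-- Membership in the space `L^W`. -/
def MemLW (Ps : Set (Measure Ω)) (W X : Ω → ℝ) : Prop :=
  Measurable X ∧ (Bounds Ps W X).Nonempty

/-- The norm `‖X‖_W` (for `W = 1` this is the quasi-sure sup-norm `‖·‖_{Ps,∞}`). -/
noncomputable def normW (Ps : Set (Measure Ω)) (W X : Ω → ℝ) : ℝ :=
  sInf (Bounds Ps W X)

/-- `Kc` is a convex cone of measurable functions containing `0`. -/
def IsConvexCone (Kc : Set (Ω → ℝ)) : Prop :=
  (∀ k ∈ Kc, Measurable k) ∧ (fun _ => (0 : ℝ)) ∈ Kc ∧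
  (∀ k ∈ Kc, ∀ c : ℝ, 0 ≤ c → (fun ω => c * k ω) ∈ Kc) ∧
  (∀ k₁ ∈ Kc, ∀ k₂ ∈ Kc, (fun ω => k₁ ω + k₂ ω) ∈ Kc)

/-- `Kc_λ`: the elements of `Kc` bounded below by `-λ • W` quasi surely. -/
def Klam (Ps : Set (Measure Ω)) (W : Ω → ℝ) (Kc : Set (Ω → ℝ)) (l : ℝ) : Set (Ω → ℝ) :=
  {k ∈ Kc | LeQS Ps (fun ω => -l * W ω) k}

/-- The cone `𝒞` of claims super-replicable at zero cost. -/
def coneC (Ps : Set (Measure Ω)) (W : Ω → ℝ) (Kc : Set (Ω → ℝ)) : Set (Ω → ℝ) :=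
  {X | MemLW Ps W X ∧ ∃ k ∈ Kc, LeQS Ps X k}

/-- The set `𝒞_λ`. -/
def coneCLam (Ps : Set (Measure Ω)) (W : Ω → ℝ) (Kc : Set (Ω → ℝ)) (l : ℝ) : Set (Ω → ℝ) :=
  {X | MemLW Ps W X ∧ ∃ k ∈ Klam Ps W Kc l, LeQS Ps X k}

/-- The sensitive cone `𝒞̃`. -/
def coneCTilde (Ps : Set (Measure Ω)) (W : Ω → ℝ) (Kc : Set (Ω → ℝ)) : Set (Ω → ℝ) :=
  {X | MemLW Ps W X ∧ ∀ P ∈ Ps, ∃ k ∈ Kc, ∀ᵐ ω ∂P, X ω ≤ k ω}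

/-- The sensitive set `𝒞̃_λ`. -/
def coneCTildeLam (Ps : Set (Measure Ω)) (W : Ω → ℝ) (Kc : Set (Ω → ℝ)) (l : ℝ) :
    Set (Ω → ℝ) :=
  {X | MemLW Ps W X ∧ ∀ P ∈ Ps, ∃ k ∈ Klam Ps W Kc l, ∀ᵐ ω ∂P, X ω ≤ k ω}

/-- `𝒞̂ = ⋃_{λ ≥ 0} 𝒞̃_λ`. -/
def coneCHat (Ps : Set (Measure Ω)) (W : Ω → ℝ) (Kc : Set (Ω → ℝ)) : Set (Ω → ℝ) :=
  ⋃ l ∈ {r : ℝ | 0 ≤ r}, coneCTildeLam Ps W Kc l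

/-- A set `A ⊆ L^W` is Fatou closed: it is stable under quasi-sure limits of
`‖·‖_W`-bounded sequences. -/
def FatouClosed (Ps : Set (Measure Ω)) (W : Ω → ℝ) (A : Set (Ω → ℝ)) : Prop :=
  ∀ X : ℕ → Ω → ℝ, (∀ n, X n ∈ A) → (∃ m : ℝ, ∀ n, m ∈ Bounds Ps W (X n)) →
    ∀ Y : Ω → ℝ, MemLW Ps W Y →
      Polar Ps {ω | ¬ Tendsto (fun n => X n ω) atTop (nhds (Y ω))} → Y ∈ A

/-- Bounded measurable real-valued function. -/
def BddMeas (X : Ω → ℝ) : Prop := Measurable X ∧ ∃ c : ℝ, ∀ ω, |X ω| ≤ c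

/-- sensitive No Free Lunch with Vanishing Risk: any quasi-surely nonnegative
bounded measurable `ξ` which is a `‖·‖_{Ps,∞}`-limit of elements of `𝒞̃ ∩ L^∞`
vanishes quasi surely. -/
def sNFLVR (Ps : Set (Measure Ω)) (W : Ω → ℝ) (Kc : Set (Ω → ℝ)) : Prop :=
  ∀ ξ : Ω → ℝ, BddMeas ξ → LeQS Ps (fun _ => 0) ξ →
    (∃ X : ℕ → Ω → ℝ,
      (∀ n, X n ∈ coneCTilde Ps W Kc ∧ MemLW Ps (fun _ => 1) (X n)) ∧
      Tendsto (fun n => normW Ps (fun _ => 1) (fun ω => X n ω - ξ ω)) atTop (nhds 0)) →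
    EqQS Ps ξ (fun _ => 0)

/-- No Arbitrage for the cone `Kc`. -/
def NA (Ps : Set (Measure Ω)) (Kc : Set (Ω → ℝ)) : Prop :=
  ∀ k ∈ Kc, LeQS Ps (fun _ => 0) k → EqQS Ps k (fun _ => 0)

/-- `Ps_W`: probability measures dominated by some member of `Ps` and integrating `W`. -/
def PW (Ps : Set (Measure Ω)) (W : Ω → ℝ) : Set (Measure Ω) :=
  {Q | IsProbabilityMeasure Q ∧ (∃ P ∈ Ps, Q ≪ P) ∧ Integrable W Q}

/-- An approximate separating class `(Q_n)_{n ≥ 1}`. -/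
def ApproxSep (Ps : Set (Measure Ω)) (W : Ω → ℝ) (Kc : Set (Ω → ℝ))
    (Q : ℕ → Measure Ω) : Prop :=
  (∀ n : ℕ, 1 ≤ n → Q n ∈ PW Ps W) ∧
  (∃ Pbar ∈ Ps, ∀ n : ℕ, 1 ≤ n → Q n ≪ Pbar) ∧
  (∀ n : ℕ, 1 ≤ n → ∀ X ∈ coneCLam Ps W Kc (n : ℝ), ∫ ω, X ω ∂(Q n) ≤ 1 / (n : ℝ))

/-- `Q_app ≈ Ps` : the approximate separating classes and `Ps` share the same
polar sets. -/
def QappEquivP (Ps : Set (Measure Ω)) (W : Ω → ℝ) (Kc : Set (Ω → ℝ)) : Prop :=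
  ∀ A : Set Ω, MeasurableSet A →
    ((∀ Q : ℕ → Measure Ω, ApproxSep Ps W Kc Q → ∀ n : ℕ, 1 ≤ n → Q n A = 0) ↔ Polar Ps A)

/-- The superhedging-type functional `ρ_A`, with values in `EReal` and the
convention `inf ∅ = +∞`. -/
noncomputable def rho (A : Set (Ω → ℝ)) (X : Ω → ℝ) : EReal :=
  sInf {y : EReal | ∃ x : ℝ, y = (x : EReal) ∧ (fun ω => X ω - x) ∈ A}

end Paper

namespace Paper

/-!
Since `𝒞̃` is stable under passing to quasi-surely smaller elements of `L^W`, a bounded `ξ` is a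
uniform limit of elements of `𝒞̃ ∩ L^∞` exactly when `ξ - ε ∈ 𝒞̃` for all `ε > 0`, that is, when
`ρ_{𝒞̃}(ξ) ≤ 0`. For indicators: if `ξ ≥ 0` then `c · 1_{ξ > c} ≤ ξ`, and `𝒞̃` is a cone, so
`ρ_{𝒞̃}(ξ) ≤ 0` forces `ρ_{𝒞̃}(1_{ξ > c}) ≤ 0` for every `c > 0`; a nonzero `ξ` has some
`{ξ > c}` that is not polar.
-/

section QuasiSure

variable {Ω : Type*} [MeasurableSpace Ω] {Ps : Set (Measure Ω)} {X Y : Ω → ℝ}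

lemma Polar.mono {A B : Set Ω} (hB : Polar Ps B) (h : A ⊆ B) : Polar Ps A := by
  obtain ⟨N, hN, hBN, hnull⟩ := hB
  exact ⟨N, hN, h.trans hBN, hnull⟩

lemma polar_sUnion {S : Set (Set Ω)} (hS : S.Countable) (h : ∀ A ∈ S, Polar Ps A) :
    Polar Ps (⋃₀ S) := by
  choose! N hN hsub hnull using h
  refine ⟨⋃ A ∈ S, N A, .biUnion hS hN, ?_,
    fun P hP => (measure_biUnion_null_iff hS).2 fun A hA => hnull A hA P hP⟩
  rw [Set.sUnion_eq_biUnion]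
  exact Set.biUnion_mono subset_rfl hsub

/-- The filter of sets with polar complement, so that `∀ᶠ ω in qsFilter Ps, p ω` says
that `p` holds quasi surely. -/
def qsFilter (Ps : Set (Measure Ω)) : Filter Ω :=
  Filter.ofCountableUnion {N | Polar Ps N} (fun _ => polar_sUnion) fun _ hB _ => hB.mono

instance : CountableInterFilter (qsFilter Ps) :=
  Filter.countableInter_ofCountableUnion _ _ _

lemma eventually_qsFilter {p : Ω → Prop} :
    (∀ᶠ ω in qsFilter Ps, p ω) ↔ Polar Ps {ω | ¬ p ω} := Iff.rfl

lemma leQS_iff : LeQS Ps X Y ↔ ∀ᶠ ω in qsFilter Ps, X ω ≤ Y ω := Iff.rfl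

lemma eqQS_iff : EqQS Ps X Y ↔ ∀ᶠ ω in qsFilter Ps, X ω = Y ω := Iff.rfl

lemma ae_le_qsFilter {P : Measure Ω} (hP : P ∈ Ps) : ae P ≤ qsFilter Ps := by
  rintro s ⟨N, -, hsub, hnull⟩
  exact measure_mono_null hsub (hnull P hP)

lemma eqQS_zero_of_forall_polar_lt (hX : LeQS Ps (fun _ => 0) X)
    (h : ∀ c > 0, Polar Ps {ω | c < X ω}) : EqQS Ps X (fun _ => 0) := by
  have hle : ∀ᶠ ω in qsFilter Ps, ∀ n : ℕ, X ω ≤ 1 / ((n : ℝ) + 1) := by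
    refine eventually_countable_forall.2 fun n => eventually_qsFilter.2 ?_
    simpa only [not_le] using h _ Nat.one_div_pos_of_nat
  refine eqQS_iff.2 ?_
  filter_upwards [leQS_iff.1 hX, hle] with ω hnonneg hω
  exact le_antisymm (ge_of_tendsto' tendsto_one_div_add_atTop_nhds_zero_nat hω) hnonneg

end QuasiSure

section WeightedSpace

variable {Ω : Type*} [MeasurableSpace Ω] {Ps : Set (Measure Ω)} {W X Y : Ω → ℝ}

lemma mem_bounds_iff {m : ℝ} :
    m ∈ Bounds Ps W X ↔ 0 ≤ m ∧ ∀ᶠ ω in qsFilter Ps, |X ω| ≤ m * W ω := by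
  simp only [Bounds, Set.mem_ofPred_eq, eventually_qsFilter, not_le]

lemma MemLW.of_abs_le (hY : MemLW Ps W Y) (hX : Measurable X) {c : ℝ} (hc : 0 ≤ c)
    (h : ∀ᶠ ω in qsFilter Ps, |X ω| ≤ c * |Y ω|) : MemLW Ps W X := by
  obtain ⟨-, m, hm⟩ := hY
  obtain ⟨hm0, hYm⟩ := mem_bounds_iff.1 hm
  refine ⟨hX, c * m, mem_bounds_iff.2 ⟨mul_nonneg hc hm0, ?_⟩⟩
  filter_upwards [h, hYm] with ω hXY hYW
  calc |X ω| ≤ c * |Y ω| := hXY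
    _ ≤ c * (m * W ω) := mul_le_mul_of_nonneg_left hYW hc
    _ = c * m * W ω := (mul_assoc _ _ _).symm

lemma MemLW.const_mul (hX : MemLW Ps W X) (c : ℝ) : MemLW Ps W (fun ω => c * X ω) :=
  hX.of_abs_le (hX.1.const_mul c) (abs_nonneg c) (.of_forall fun _ => (abs_mul _ _).le)

lemma MemLW.sub (hX : MemLW Ps W X) (hY : MemLW Ps W Y) :
    MemLW Ps W (fun ω => X ω - Y ω) := by
  obtain ⟨hXmeas, m, hm⟩ := hX
  obtain ⟨hYmeas, l, hl⟩ := hY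
  obtain ⟨hm0, hXm⟩ := mem_bounds_iff.1 hm
  obtain ⟨hl0, hYl⟩ := mem_bounds_iff.1 hl
  refine ⟨hXmeas.sub hYmeas, m + l, mem_bounds_iff.2 ⟨add_nonneg hm0 hl0, ?_⟩⟩
  filter_upwards [hXm, hYl] with ω hXω hYω
  calc |X ω - Y ω| ≤ |X ω| + |Y ω| := abs_sub _ _
    _ ≤ m * W ω + l * W ω := add_le_add hXω hYω
    _ = (m + l) * W ω := (add_mul _ _ _).symm

lemma MemLW.sub_const (hX : MemLW Ps W X) (hW : MemLW Ps W (fun _ => 1)) (x : ℝ) :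
    MemLW Ps W (fun ω => X ω - x) := by
  simpa only [mul_one] using hX.sub (hW.const_mul x)

lemma memLW_one_of_one_le (hW : ∀ ω, 1 ≤ W ω) : MemLW Ps W (fun _ => 1) :=
  ⟨measurable_const, 1, mem_bounds_iff.2 ⟨zero_le_one, .of_forall fun ω => by simpa using hW ω⟩⟩

lemma MemLW.of_memLW_one (hX : MemLW Ps (fun _ => 1) X) (hW : MemLW Ps W (fun _ => 1)) :
    MemLW Ps W X := by
  obtain ⟨hmeas, m, hm⟩ := hX
  obtain ⟨hm0, hXm⟩ := mem_bounds_iff.1 hm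
  exact hW.of_abs_le hmeas hm0 (by simpa only [abs_one] using hXm)

lemma BddMeas.memLW (hX : BddMeas X) (hW : MemLW Ps W (fun _ => 1)) : MemLW Ps W X := by
  obtain ⟨hmeas, c, hc⟩ := hX
  refine hW.of_abs_le hmeas (abs_nonneg c) (.of_forall fun ω => ?_)
  simpa using (hc ω).trans (le_abs_self c)

lemma bddMeas_indicator_one {A : Set Ω} (hA : MeasurableSet A) :
    BddMeas (A.indicator fun _ => (1 : ℝ)) := by
  refine ⟨measurable_const.indicator hA, 1, fun ω => ?_⟩
  simpa using norm_indicator_le_norm_self (fun _ : Ω => (1 : ℝ)) ω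

lemma normW_nonneg : 0 ≤ normW Ps W X :=
  Real.sInf_nonneg fun _ hm => hm.1

lemma normW_le {m : ℝ} (hm : 0 ≤ m) (h : ∀ᶠ ω in qsFilter Ps, |X ω| ≤ m * W ω) :
    normW Ps W X ≤ m :=
  csInf_le ⟨0, fun _ hl => hl.1⟩ (mem_bounds_iff.2 ⟨hm, h⟩)

lemma MemLW.exists_lt_of_normW_lt (hX : MemLW Ps W X) {r : ℝ} (h : normW Ps W X < r) :
    ∃ m < r, ∀ᶠ ω in qsFilter Ps, |X ω| ≤ m * W ω := by
  obtain ⟨m, hm, hmr⟩ := exists_lt_of_csInf_lt hX.2 h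
  exact ⟨m, hmr, (mem_bounds_iff.1 hm).2⟩

end WeightedSpace

lemma rho_le_coe_iff {Ω : Type*} {A : Set (Ω → ℝ)} {X : Ω → ℝ} {a : ℝ} :
    rho A X ≤ a ↔ ∀ b > a, ∃ x < b, (fun ω => X ω - x) ∈ A := by
  constructor
  · intro h b hb
    obtain ⟨_, ⟨x, rfl, hx⟩, hxb⟩ := sInf_lt_iff.1 (h.trans_lt (EReal.coe_lt_coe_iff.2 hb))
    exact ⟨x, EReal.coe_lt_coe_iff.1 hxb, hx⟩
  · intro h
    refine EReal.le_of_forall_lt_iff_le.1 fun b hb => ?_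
    obtain ⟨x, hxb, hx⟩ := h b (EReal.coe_lt_coe_iff.1 hb)
    calc rho A X ≤ x := sInf_le ⟨x, rfl, hx⟩
      _ ≤ b := EReal.coe_le_coe_iff.2 hxb.le

section Superhedging

variable {Ω : Type*} [MeasurableSpace Ω] {Ps : Set (Measure Ω)} {W X Y : Ω → ℝ}
  {Kc : Set (Ω → ℝ)}

lemma mem_coneCTilde_of_leQS (hY : Y ∈ coneCTilde Ps W Kc) (hX : MemLW Ps W X)
    (h : LeQS Ps X Y) : X ∈ coneCTilde Ps W Kc := by
  refine ⟨hX, fun P hP => ?_⟩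
  obtain ⟨k, hk, hYk⟩ := hY.2 P hP
  refine ⟨k, hk, ?_⟩
  filter_upwards [ae_le_qsFilter hP (leQS_iff.1 h), hYk] with ω hXY hYk
  exact hXY.trans hYk

lemma const_mul_mem_coneCTilde
    (hKc : ∀ k ∈ Kc, ∀ c : ℝ, 0 < c → (fun ω => c * k ω) ∈ Kc) {c : ℝ} (hc : 0 < c)
    (hX : X ∈ coneCTilde Ps W Kc) : (fun ω => c * X ω) ∈ coneCTilde Ps W Kc := by
  refine ⟨hX.1.const_mul c, fun P hP => ?_⟩
  obtain ⟨k, hk, hXk⟩ := hX.2 P hP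
  exact ⟨_, hKc k hk c hc, hXk.mono fun ω hω => mul_le_mul_of_nonneg_left hω hc.le⟩

lemma rho_coneCTilde_mono (hW : MemLW Ps W (fun _ => 1)) (hX : MemLW Ps W X)
    (h : LeQS Ps X Y) : rho (coneCTilde Ps W Kc) X ≤ rho (coneCTilde Ps W Kc) Y := by
  refine sInf_le_sInf ?_
  rintro _ ⟨x, rfl, hx⟩
  refine ⟨x, rfl, mem_coneCTilde_of_leQS hx (hX.sub_const hW x) (leQS_iff.2 ?_)⟩
  exact (leQS_iff.1 h).mono fun ω hω => sub_le_sub_right hω x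

lemma rho_coneCTilde_nonpos_of_const_mul
    (hKc : ∀ k ∈ Kc, ∀ c : ℝ, 0 < c → (fun ω => c * k ω) ∈ Kc) {c : ℝ} (hc : 0 < c)
    (h : rho (coneCTilde Ps W Kc) (fun ω => c * X ω) ≤ 0) :
    rho (coneCTilde Ps W Kc) X ≤ 0 := by
  refine rho_le_coe_iff.2 fun b hb => ?_
  obtain ⟨x, hxb, hx⟩ := rho_le_coe_iff.1 h (c * b) (mul_pos hc hb)
  refine ⟨c⁻¹ * x, (inv_mul_lt_iff₀ hc).2 hxb, ?_⟩
  simpa only [mul_sub, inv_mul_cancel_left₀ hc.ne'] using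
    const_mul_mem_coneCTilde hKc (inv_pos.2 hc) hx

lemma rho_indicator_lt_nonpos (hW : MemLW Ps W (fun _ => 1))
    (hKc : ∀ k ∈ Kc, ∀ c : ℝ, 0 < c → (fun ω => c * k ω) ∈ Kc)
    (hX : Measurable X) (hX0 : LeQS Ps (fun _ => 0) X)
    (hrho : rho (coneCTilde Ps W Kc) X ≤ 0) {c : ℝ} (hc : 0 < c) :
    rho (coneCTilde Ps W Kc) ({ω | c < X ω}.indicator fun _ => 1) ≤ 0 := by
  have hind : MemLW Ps W ({ω | c < X ω}.indicator fun _ => 1) :=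
    (bddMeas_indicator_one (measurableSet_lt measurable_const hX)).memLW hW
  -- Markov's inequality before taking expectations.
  have hmarkov : LeQS Ps (fun ω => c * {ω | c < X ω}.indicator (fun _ => 1) ω) X := by
    refine leQS_iff.2 ((leQS_iff.1 hX0).mono fun ω hω => ?_)
    by_cases h : c < X ω
    · simpa [h] using h.le
    · simpa [h] using hω
  exact rho_coneCTilde_nonpos_of_const_mul hKc hc
    ((rho_coneCTilde_mono hW (hind.const_mul c) hmarkov).trans hrho)

lemma rho_nonpos_of_tendsto_normW (hW : MemLW Ps W (fun _ => 1)) {ξ : Ω → ℝ}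
    (hξ : MemLW Ps (fun _ => 1) ξ)
    {X : ℕ → Ω → ℝ} (hX : ∀ n, X n ∈ coneCTilde Ps W Kc ∧ MemLW Ps (fun _ => 1) (X n))
    (hlim : Tendsto (fun n => normW Ps (fun _ => 1) (fun ω => X n ω - ξ ω)) atTop (𝓝 0)) :
    rho (coneCTilde Ps W Kc) ξ ≤ 0 := by
  refine rho_le_coe_iff.2 fun b hb => ?_
  obtain ⟨n, hn⟩ := (hlim.eventually_lt_const hb).exists
  obtain ⟨m, hmb, hm⟩ := ((hX n).2.sub hξ).exists_lt_of_normW_lt hn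
  have hξm : MemLW Ps W (fun ω => ξ ω - m) := (hξ.of_memLW_one hW).sub_const hW m
  refine ⟨m, hmb, mem_coneCTilde_of_leQS (hX n).1 hξm (leQS_iff.2 ?_)⟩
  filter_upwards [hm] with ω hω
  linarith [neg_le_of_abs_le hω]

lemma exists_tendsto_normW_of_rho_nonpos (hW : MemLW Ps W (fun _ => 1)) {ξ : Ω → ℝ}
    (hξ : MemLW Ps (fun _ => 1) ξ) (hrho : rho (coneCTilde Ps W Kc) ξ ≤ 0) :
    ∃ X : ℕ → Ω → ℝ,
      (∀ n, X n ∈ coneCTilde Ps W Kc ∧ MemLW Ps (fun _ => 1) (X n)) ∧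
      Tendsto (fun n => normW Ps (fun _ => 1) (fun ω => X n ω - ξ ω)) atTop (𝓝 0) := by
  have hmem (n : ℕ) : (fun ω => ξ ω - 1 / ((n : ℝ) + 1)) ∈ coneCTilde Ps W Kc := by
    obtain ⟨x, hxn, hx⟩ := rho_le_coe_iff.1 hrho _ (Nat.one_div_pos_of_nat (n := n))
    exact mem_coneCTilde_of_leQS hx ((hξ.of_memLW_one hW).sub_const hW _)
      (leQS_iff.2 (.of_forall fun ω => sub_le_sub_left hxn.le _))
  refine ⟨fun n ω => ξ ω - 1 / ((n : ℝ) + 1), fun n =>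
    ⟨hmem n, hξ.sub_const (memLW_one_of_one_le fun _ => le_rfl) _⟩, ?_⟩
  refine squeeze_zero (fun _ => normW_nonneg) (fun n => ?_)
    tendsto_one_div_add_atTop_nhds_zero_nat
  have hn : (0 : ℝ) ≤ 1 / ((n : ℝ) + 1) := Nat.one_div_pos_of_nat.le
  refine normW_le hn (.of_forall fun ω => ?_)
  rw [sub_sub_cancel_left, abs_neg, abs_of_nonneg hn, mul_one]

lemma sNFLVR_iff_forall_rho_pos (hW : MemLW Ps W (fun _ => 1)) :
    sNFLVR Ps W Kc ↔
      ∀ ξ : Ω → ℝ, BddMeas ξ → LeQS Ps (fun _ => 0) ξ → ¬ EqQS Ps ξ (fun _ => 0) →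
        (0 : EReal) < rho (coneCTilde Ps W Kc) ξ := by
  refine forall₃_congr fun ξ hξ _ => ?_
  have hξ1 : MemLW Ps (fun _ => 1) ξ := hξ.memLW (memLW_one_of_one_le fun _ => le_rfl)
  refine ⟨fun h hne => ?_, fun h ⟨X, hX, hlim⟩ => ?_⟩
  · exact lt_of_not_ge fun hrho => hne (h (exists_tendsto_normW_of_rho_nonpos hW hξ1 hrho))
  · by_contra hne
    exact (h hne).not_ge (rho_nonpos_of_tendsto_normW hW hξ1 hX hlim)

lemma forall_rho_pos_iff_forall_rho_indicator_pos (hW : MemLW Ps W (fun _ => 1))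
    (hKc : ∀ k ∈ Kc, ∀ c : ℝ, 0 < c → (fun ω => c * k ω) ∈ Kc) :
    (∀ ξ : Ω → ℝ, BddMeas ξ → LeQS Ps (fun _ => 0) ξ → ¬ EqQS Ps ξ (fun _ => 0) →
        (0 : EReal) < rho (coneCTilde Ps W Kc) ξ) ↔
      ∀ A : Set Ω, MeasurableSet A → ¬ Polar Ps A →
        (0 : EReal) < rho (coneCTilde Ps W Kc) (A.indicator fun _ => (1 : ℝ)) := by
  constructor
  · intro h A hA hpolar
    refine h _ (bddMeas_indicator_one hA)
      (leQS_iff.2 (.of_forall (Set.indicator_nonneg fun _ _ => zero_le_one))) fun heq => ?_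
    exact hpolar (Polar.mono heq fun ω hω => by simp [hω])
  · intro h ξ hξ hξ0 hne
    by_contra! hrho
    refine hne (eqQS_zero_of_forall_polar_lt hξ0 fun c hc => ?_)
    by_contra hpolar
    exact (h _ (measurableSet_lt measurable_const hξ.1) hpolar).not_ge
      (rho_indicator_lt_nonpos hW hKc hξ.1 hξ0 hrho hc)

end Superhedging

theorem sNFLVR_iff_rho_pos_general {Ω : Type*} [MeasurableSpace Ω]
    (Ps : Set (Measure Ω)) (W : Ω → ℝ) (hW : MemLW Ps W (fun _ => 1))
    (Kc : Set (Ω → ℝ)) (hKc : ∀ k ∈ Kc, ∀ c : ℝ, 0 < c → (fun ω => c * k ω) ∈ Kc) :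
    (sNFLVR Ps W Kc ↔
      ∀ ξ : Ω → ℝ, BddMeas ξ → LeQS Ps (fun _ => 0) ξ → ¬ EqQS Ps ξ (fun _ => 0) →
        (0 : EReal) < rho (coneCTilde Ps W Kc) ξ) ∧
    ((∀ ξ : Ω → ℝ, BddMeas ξ → LeQS Ps (fun _ => 0) ξ → ¬ EqQS Ps ξ (fun _ => 0) →
        (0 : EReal) < rho (coneCTilde Ps W Kc) ξ) ↔
      ∀ A : Set Ω, MeasurableSet A → ¬ Polar Ps A →
        (0 : EReal) < rho (coneCTilde Ps W Kc) (A.indicator fun _ => (1 : ℝ))) :=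
  ⟨sNFLVR_iff_forall_rho_pos hW, forall_rho_pos_iff_forall_rho_indicator_pos hW hKc⟩

/-- **Lemma (`strict:positive`).** sNFLVR is equivalent to strict positivity of
`ρ_{𝒞̃}` on nonzero nonnegative bounded claims, and to strict positivity of
`ρ_{𝒞̃}` on indicators of non-polar events. -/
theorem sNFLVR_iff_rho_pos {Ω : Type*} [MeasurableSpace Ω]
    (Ps : Set (Measure Ω)) (hPsne : Ps.Nonempty)
    (hPsprob : ∀ P ∈ Ps, IsProbabilityMeasure P)
    (W : Ω → ℝ) (hWmeas : Measurable W) (hW1 : ∀ ω, 1 ≤ W ω)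
    (Kc : Set (Ω → ℝ)) (hKc : IsConvexCone Kc) :
    (sNFLVR Ps W Kc ↔
      ∀ ξ : Ω → ℝ, BddMeas ξ → LeQS Ps (fun _ => 0) ξ → ¬ EqQS Ps ξ (fun _ => 0) →
        (0 : EReal) < rho (coneCTilde Ps W Kc) ξ) ∧
    ((∀ ξ : Ω → ℝ, BddMeas ξ → LeQS Ps (fun _ => 0) ξ → ¬ EqQS Ps ξ (fun _ => 0) →
        (0 : EReal) < rho (coneCTilde Ps W Kc) ξ) ↔
      ∀ A : Set Ω, MeasurableSet A → ¬ Polar Ps A →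
        (0 : EReal) < rho (coneCTilde Ps W Kc) (A.indicator fun _ => (1 : ℝ))) := by
  exact sNFLVR_iff_rho_pos_general Ps W (memLW_one_of_one_le hW1) Kc
    fun k hk c hc => hKc.2.2.1 k hk c hc.le

end Paper
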